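/- Let $n \geq 3$ and $W \in L^{n/2,1}(\mathbb{R}^n)$. For all $x, y \in \mathbb{R}^n$ with $x \neq y$ it holds that $\int_{\mathbb{R}^n} \frac{1}{|x-z|^{n-2}}\,|W(z)|\,\frac{1}{|z-y|^{n-2}}\,dz \leq \|a\|_{\frac{n}{n-2},\infty}\,\|W\|_{n/2,1}\,\frac{2^{n-1}}{|x-y|^{n-2}}$, where $a(x) = |x|^{-(n-2)}$. -/

import Mathlib

open MeasureTheory ENNReal Filter
open scoped ENNReal NNReal

noncomputable section

/-- Euclidean space `ℝⁿ`. -/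
abbrev Rn (n : ℕ) : Type := EuclideanSpace ℝ (Fin n)

/-- The distribution function `d_f(t) = |{x : |f x| > t}|` (Lebesgue measure). -/
def distFun {n : ℕ} (f : Rn n → ℂ) (t : ℝ) : ℝ≥0∞ :=
  volume {x : Rn n | t < ‖f x‖}

/-- The Lorentz quasinorm `‖f‖_{p,q}` (valued in `ℝ≥0∞`).  For `q < ∞` it is
`p^{1/q} (∫_0^∞ t^{q-1} d_f(t)^{q/p} dt)^{1/q}`; for `q = ∞`, `p < ∞` it is
`sup_{t>0} t · d_f(t)^{1/p}`; for `p = q = ∞` it is the essential supremum (`L^∞`). -/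
def lorentzNorm {n : ℕ} (f : Rn n → ℂ) (p q : ℝ≥0∞) : ℝ≥0∞ :=
  if q = ∞ then
    if p = ∞ then essSup (fun x => (‖f x‖₊ : ℝ≥0∞)) volume
    else ⨆ (t : ℝ) (_ : 0 < t), ENNReal.ofReal t * distFun f t ^ (1 / p.toReal)
  else
    p ^ (1 / q.toReal) *
      (∫⁻ t in Set.Ioi (0 : ℝ),
        ENNReal.ofReal (t ^ (q.toReal - 1)) * distFun f t ^ (q.toReal / p.toReal)) ^
        (1 / q.toReal)

/-- Membership in the Lorentz space `L^{p,q}(ℝⁿ)`. -/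
def MemLorentz {n : ℕ} (f : Rn n → ℂ) (p q : ℝ≥0∞) : Prop :=
  AEStronglyMeasurable f volume ∧ lorentzNorm f p q < ∞

/-!
The key is Hölder's inequality `∫ |f g| ≤ ‖f‖_{p,∞} ‖g‖_{q,1}` for conjugate exponents, with
constant `1`.  By the layer-cake formula for `|g|`, the left side is the integral over `t > 0` of
`∫_{|g| > t} |f|`, and a function of weak type `p` satisfies `∫_E |f| ≤ q ‖f‖_{p,∞} |E|^{1/q}`; the
factor `q` is the one in the definition of `‖g‖_{q,1}`.

The Lorentz quasinorms are invariant under `z ↦ x - z`, so Hölder's inequality bounds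
`∫ |x - z|^{-s} |W(z)| dz` uniformly in `x`.  Finally, every `z` is at distance at least
`|x - y| / 2` from `x` or from `y`, so one of the two kernels is at most `2^s |x - y|^{-s}`, and
their product is at most this constant times their sum.
-/

section WeakType

variable {p q : ℝ}

lemma lintegral_Ioi_const_mul_rpow_neg (hp : 1 < p) {c s : ℝ} (hc : 0 ≤ c) (hs : 0 < s) :
    ∫⁻ t in Set.Ioi s, ENNReal.ofReal (c * t ^ (-p)) =
      ENNReal.ofReal (c * (s ^ (1 - p) / (p - 1))) := by
  have integrable : IntegrableOn (fun t : ℝ ↦ c * t ^ (-p)) (Set.Ioi s) :=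
    (integrableOn_Ioi_rpow_of_lt (by linarith) hs).const_mul c
  have nonneg : ∀ᵐ t ∂volume.restrict (Set.Ioi s), 0 ≤ c * t ^ (-p) := by
    filter_upwards [ae_restrict_mem measurableSet_Ioi] with t ht
    have : 0 < t := hs.trans ht
    positivity
  rw [← ofReal_integral_eq_lintegral_ofReal integrable nonneg, integral_const_mul,
    integral_Ioi_rpow_of_lt (by linarith) hs, ← neg_div_neg_eq, neg_neg,
    show -(-p + 1) = p - 1 by ring, show -p + 1 = 1 - p by ring]

lemma lintegral_min_ofReal_rpow_le (hpq : p.HolderConjugate q) {c e : ℝ} (hc : 0 < c)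
    (he : 0 < e) :
    ∫⁻ t in Set.Ioi 0, min (ENNReal.ofReal e) (ENNReal.ofReal (c ^ p * t ^ (-p))) ≤
      ENNReal.ofReal (q * c * e ^ q⁻¹) := by
  -- The two arguments of `min` agree at `s`.
  set s := c * e ^ (-p⁻¹)
  have hs : 0 < s := by positivity
  have mul_s : e * s = c * e ^ q⁻¹ := by
    rw [← hpq.one_sub_inv, sub_eq_add_neg, Real.rpow_add he, Real.rpow_one]
    ring
  have rpow_s : c ^ p * s ^ (1 - p) = e * s := by
    rw [Real.rpow_sub hs, Real.rpow_one, Real.mul_rpow hc.le (by positivity), ← Real.rpow_mul he.le,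
      neg_mul, inv_mul_cancel₀ hpq.ne_zero, Real.rpow_neg_one]
    field_simp
  have near : ∫⁻ t in Set.Ioc 0 s, min (ENNReal.ofReal e) (ENNReal.ofReal (c ^ p * t ^ (-p))) ≤
      ENNReal.ofReal (e * s) := by
    refine (lintegral_mono fun t ↦ min_le_left _ _).trans_eq ?_
    rw [setLIntegral_const, Real.volume_Ioc, sub_zero, ENNReal.ofReal_mul he.le]
  have far : ∫⁻ t in Set.Ioi s, min (ENNReal.ofReal e) (ENNReal.ofReal (c ^ p * t ^ (-p))) ≤
      ENNReal.ofReal (e * s / (p - 1)) := by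
    refine (lintegral_mono fun t ↦ min_le_right _ _).trans_eq ?_
    rw [lintegral_Ioi_const_mul_rpow_neg hpq.lt (by positivity) hs, ← mul_div_assoc, rpow_s]
  have sub_one_pos : 0 < p - 1 := hpq.sub_one_pos
  rw [← Set.Ioc_union_Ioi_eq_Ioi hs.le,
    lintegral_union measurableSet_Ioi (Set.Ioc_disjoint_Ioi le_rfl)]
  refine (add_le_add near far).trans_eq ?_
  rw [← ENNReal.ofReal_add (by positivity) (by positivity), mul_assoc, ← mul_s, hpq.conjugate_eq]
  congr 1
  field_simp
  ring

lemma lintegral_min_div_rpow_le (hpq : p.HolderConjugate q) (A e : ℝ≥0∞) :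
    ∫⁻ t in Set.Ioi (0 : ℝ), min e ((A / ENNReal.ofReal t) ^ p) ≤
      ENNReal.ofReal q * A * e ^ q⁻¹ := by
  have hq : ENNReal.ofReal q ≠ 0 := ENNReal.ofReal_ne_zero_iff.2 hpq.symm.pos
  rcases eq_or_ne A 0 with rfl | hA
  · simp [hpq.pos]
  rcases eq_or_ne e 0 with rfl | he
  · simp
  rcases eq_or_ne A ∞ with rfl | hA_top
  · simp [hq, he, hpq.symm.nonneg]
  rcases eq_or_ne e ∞ with rfl | he_top
  · simp [hpq.symm.pos, hq, hA]
  lift A to ℝ≥0 using hA_top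
  lift e to ℝ≥0 using he_top
  have hA : 0 < (A : ℝ) := by simpa [pos_iff_ne_zero] using hA
  have he : 0 < (e : ℝ) := by simpa [pos_iff_ne_zero] using he
  have div_rpow_eq : ∀ t ∈ Set.Ioi (0 : ℝ),
      ((A : ℝ≥0∞) / ENNReal.ofReal t) ^ p = ENNReal.ofReal ((A : ℝ) ^ p * t ^ (-p)) := by
    intro t (ht : 0 < t)
    rw [← ENNReal.ofReal_coe_nnreal, ← ENNReal.ofReal_div_of_pos ht,
      ENNReal.ofReal_rpow_of_pos (by positivity), Real.div_rpow hA.le ht.le, Real.rpow_neg ht.le,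
      div_eq_mul_inv]
  calc ∫⁻ t in Set.Ioi (0 : ℝ), min (e : ℝ≥0∞) ((A / ENNReal.ofReal t) ^ p)
      = ∫⁻ t in Set.Ioi (0 : ℝ),
          min (ENNReal.ofReal e) (ENNReal.ofReal ((A : ℝ) ^ p * t ^ (-p))) :=
        setLIntegral_congr_fun measurableSet_Ioi fun t ht ↦ by
          rw [div_rpow_eq t ht, ENNReal.ofReal_coe_nnreal]
    _ ≤ ENNReal.ofReal (q * A * e ^ q⁻¹) := lintegral_min_ofReal_rpow_le hpq hA he
    _ = ENNReal.ofReal q * A * e ^ q⁻¹ := by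
        rw [ENNReal.ofReal_mul (mul_nonneg hpq.symm.nonneg hA.le),
          ENNReal.ofReal_mul hpq.symm.nonneg, ← ENNReal.ofReal_rpow_of_pos he,
          ENNReal.ofReal_coe_nnreal, ENNReal.ofReal_coe_nnreal]

variable {α F G : Type*} [MeasurableSpace α] {μ : Measure α} [NormedAddCommGroup F]
  [NormedAddCommGroup G] {f : α → F} {g : α → G}

lemma lintegral_enorm_eq_lintegral_meas_lt (hf : AEStronglyMeasurable f μ) :
    ∫⁻ a, ‖f a‖ₑ ∂μ = ∫⁻ t in Set.Ioi (0 : ℝ), μ {a | t < ‖f a‖} := by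
  simpa only [ofReal_norm] using
    lintegral_eq_lintegral_meas_lt μ (.of_forall fun a ↦ norm_nonneg (f a)) hf.norm.aemeasurable

lemma lintegral_mul_enorm_eq_lintegral_setLIntegral {w : α → ℝ≥0∞} (hw : AEMeasurable w μ)
    (hg : AEStronglyMeasurable g μ) :
    ∫⁻ a, w a * ‖g a‖ₑ ∂μ =
      ∫⁻ t in Set.Ioi (0 : ℝ), ∫⁻ a in {a | t < ‖g a‖}, w a ∂μ := by
  have hg' : AEStronglyMeasurable g (μ.withDensity w) :=
    hg.mono_ac (withDensity_absolutelyContinuous μ w)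
  calc ∫⁻ a, w a * ‖g a‖ₑ ∂μ
      = ∫⁻ a, ‖g a‖ₑ ∂μ.withDensity w :=
        (lintegral_withDensity_eq_lintegral_mul₀ hw hg.enorm).symm
    _ = ∫⁻ t in Set.Ioi (0 : ℝ), μ.withDensity w {a | t < ‖g a‖} :=
        lintegral_enorm_eq_lintegral_meas_lt hg'
    _ = ∫⁻ t in Set.Ioi (0 : ℝ), ∫⁻ a in {a | t < ‖g a‖}, w a ∂μ :=
        lintegral_congr fun t ↦
          withDensity_apply₀ w (nullMeasurableSet_lt aemeasurable_const hg.norm.aemeasurable)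

lemma setLIntegral_enorm_le_of_meas_lt_le (hpq : p.HolderConjugate q)
    (hf : AEStronglyMeasurable f μ) {A : ℝ≥0∞}
    (hA : ∀ t : ℝ, 0 < t → μ {a | t < ‖f a‖} ≤ (A / ENNReal.ofReal t) ^ p) (E : Set α) :
    ∫⁻ a in E, ‖f a‖ₑ ∂μ ≤ ENNReal.ofReal q * A * μ E ^ q⁻¹ := by
  rw [lintegral_enorm_eq_lintegral_meas_lt hf.restrict]
  refine (setLIntegral_mono' measurableSet_Ioi fun t ht ↦ le_min ?_ ?_).trans
    (lintegral_min_div_rpow_le hpq A (μ E))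
  · exact (measure_mono (Set.subset_univ _)).trans_eq (Measure.restrict_apply_univ E)
  · exact (Measure.restrict_apply_le _ _).trans (hA t ht)

lemma lintegral_enorm_mul_enorm_le_of_meas_lt_le (hpq : p.HolderConjugate q)
    (hf : AEStronglyMeasurable f μ) (hg : AEStronglyMeasurable g μ) {A : ℝ≥0∞}
    (hA : ∀ t : ℝ, 0 < t → μ {a | t < ‖f a‖} ≤ (A / ENNReal.ofReal t) ^ p) :
    ∫⁻ a, ‖f a‖ₑ * ‖g a‖ₑ ∂μ ≤
      ENNReal.ofReal q * A * ∫⁻ t in Set.Ioi (0 : ℝ), μ {a | t < ‖g a‖} ^ q⁻¹ := by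
  have antitone_distribution : Antitone fun t : ℝ ↦ μ {a | t < ‖g a‖} ^ q⁻¹ := fun s t hst ↦
    ENNReal.rpow_le_rpow (measure_mono fun _ ↦ hst.trans_lt) hpq.symm.inv_nonneg
  rw [lintegral_mul_enorm_eq_lintegral_setLIntegral hf.enorm hg,
    ← lintegral_const_mul _ antitone_distribution.measurable]
  exact lintegral_mono fun t ↦ setLIntegral_enorm_le_of_meas_lt_le hpq hf hA _

end WeakType

section Lorentz

variable {n : ℕ}

lemma lorentzNorm_one (f : Rn n → ℂ) {q : ℝ} (hq : 0 ≤ q) :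
    lorentzNorm f (ENNReal.ofReal q) 1 =
      ENNReal.ofReal q * ∫⁻ t in Set.Ioi (0 : ℝ), distFun f t ^ q⁻¹ := by
  simp [lorentzNorm, ENNReal.toReal_ofReal hq]

lemma distFun_le_lorentzNorm_top (f : Rn n → ℂ) {p t : ℝ} (hp : 0 < p) (ht : 0 < t) :
    distFun f t ≤ (lorentzNorm f (ENNReal.ofReal p) ∞ / ENNReal.ofReal t) ^ p := by
  have weak_bound : ENNReal.ofReal t * distFun f t ^ p⁻¹ ≤ lorentzNorm f (ENNReal.ofReal p) ∞ := by
    rw [lorentzNorm, if_pos rfl, if_neg ENNReal.ofReal_ne_top, ENNReal.toReal_ofReal hp.le,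
      one_div]
    exact le_iSup₂ (f := fun (t : ℝ) (_ : 0 < t) ↦ ENNReal.ofReal t * distFun f t ^ p⁻¹) t ht
  rw [← ENNReal.rpow_inv_le_iff hp, ENNReal.le_div_iff_mul_le (by simp [ht]) (by simp), mul_comm]
  exact weak_bound

lemma lorentzNorm_comp_measurePreserving (f : Rn n → ℂ) {φ : Rn n ≃ᵐ Rn n}
    (hφ : MeasurePreserving φ volume volume) (p q : ℝ≥0∞) :
    lorentzNorm (f ∘ φ) p q = lorentzNorm f p q := by
  have distFun_comp : distFun (f ∘ φ) = distFun f :=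
    funext fun t ↦ hφ.measure_preimage_equiv {x | t < ‖f x‖}
  have essSup_comp : essSup (fun x ↦ (‖(f ∘ φ) x‖₊ : ℝ≥0∞)) volume =
      essSup (fun x ↦ (‖f x‖₊ : ℝ≥0∞)) volume := by
    conv_rhs => rw [← hφ.map_eq, φ.measurableEmbedding.essSup_map_measure]
    rfl
  rw [lorentzNorm, lorentzNorm, distFun_comp, essSup_comp]

lemma lintegral_enorm_mul_enorm_le_lorentzNorm {p q : ℝ} (hpq : p.HolderConjugate q)
    {f g : Rn n → ℂ} (hf : AEStronglyMeasurable f) (hg : AEStronglyMeasurable g) :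
    ∫⁻ z, ‖f z‖ₑ * ‖g z‖ₑ ≤
      lorentzNorm f (ENNReal.ofReal p) ∞ * lorentzNorm g (ENNReal.ofReal q) 1 := by
  rw [lorentzNorm_one g hpq.symm.nonneg, mul_left_comm, ← mul_assoc]
  exact lintegral_enorm_mul_enorm_le_of_meas_lt_le hpq hf hg fun t ht ↦
    distFun_le_lorentzNorm_top f hpq.pos ht

lemma lintegral_enorm_sub_mul_enorm_le_lorentzNorm {p q : ℝ} (hpq : p.HolderConjugate q)
    {f g : Rn n → ℂ} (hf : AEStronglyMeasurable f) (hg : AEStronglyMeasurable g) (x : Rn n) :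
    ∫⁻ z, ‖f (x - z)‖ₑ * ‖g z‖ₑ ≤
      lorentzNorm f (ENNReal.ofReal p) ∞ * lorentzNorm g (ENNReal.ofReal q) 1 := by
  have preserving : MeasurePreserving (MeasurableEquiv.subLeft x) volume volume :=
    volume.measurePreserving_sub_left x
  rw [← lorentzNorm_comp_measurePreserving f preserving]
  exact lintegral_enorm_mul_enorm_le_lorentzNorm hpq
    (hf.comp_measurePreserving preserving) hg

end Lorentz

section InversePower

lemma inv_rpow_mul_inv_rpow_le {s a b d : ℝ} (hs : 0 ≤ s) (hd : 0 < d) (ha : 0 ≤ a) (hb : 0 ≤ b)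
    (hdab : d ≤ a + b) :
    (a ^ s)⁻¹ * (b ^ s)⁻¹ ≤ 2 ^ s / d ^ s * ((a ^ s)⁻¹ + (b ^ s)⁻¹) := by
  have inv_rpow_le : ∀ r, d / 2 ≤ r → (r ^ s)⁻¹ ≤ 2 ^ s / d ^ s := by
    intro r hr
    rw [← Real.div_rpow zero_le_two hd.le, ← inv_div d 2, Real.inv_rpow (by positivity)]
    gcongr
  wlog hab : a ≤ b generalizing a b
  · rw [mul_comm, add_comm]
    exact this hb ha (by linarith) (le_of_not_ge hab)
  calc (a ^ s)⁻¹ * (b ^ s)⁻¹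
      ≤ (a ^ s)⁻¹ * (2 ^ s / d ^ s) := by gcongr; exact inv_rpow_le b (by linarith)
    _ = 2 ^ s / d ^ s * (a ^ s)⁻¹ := mul_comm _ _
    _ ≤ 2 ^ s / d ^ s * ((a ^ s)⁻¹ + (b ^ s)⁻¹) := by
        gcongr; exact le_add_of_nonneg_right (by positivity)

lemma ofReal_inv_rpow_norm_sub_mul_le {F : Type*} [NormedAddCommGroup F] {s : ℝ} (hs : 0 ≤ s)
    {x y : F} (hxy : x ≠ y) (z : F) (w : ℝ≥0∞) :
    ENNReal.ofReal ((‖x - z‖ ^ s)⁻¹) * w * ENNReal.ofReal ((‖z - y‖ ^ s)⁻¹) ≤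
      ENNReal.ofReal (2 ^ s / ‖x - y‖ ^ s) *
        (ENNReal.ofReal ((‖x - z‖ ^ s)⁻¹) * w + ENNReal.ofReal ((‖y - z‖ ^ s)⁻¹) * w) := by
  rw [norm_sub_rev y z, ← add_mul, ← ENNReal.ofReal_add (by positivity) (by positivity),
    ← mul_assoc, ← ENNReal.ofReal_mul (by positivity), mul_right_comm,
    ← ENNReal.ofReal_mul (by positivity)]
  gcongr ENNReal.ofReal ?_ * _
  exact inv_rpow_mul_inv_rpow_le hs (norm_sub_pos_iff.2 hxy) (norm_nonneg _) (norm_nonneg _)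
    (norm_sub_le_norm_sub_add_norm_sub x z y)

lemma holderConjugate_div_div_sub {d s : ℝ} (hs : 0 < s) (hsd : s < d) :
    (d / s).HolderConjugate (d / (d - s)) := by
  have hd : 0 < d := hs.trans hsd
  rw [← inv_div s d, ← inv_div (d - s) d]
  exact .inv_inv (by positivity) (div_pos (sub_pos.2 hsd) hd) (by field_simp; ring)

variable {n : ℕ} {s : ℝ}

lemma lintegral_inv_rpow_norm_sub_mul_enorm_le (hs : 0 < s) (hsn : s < n) {W : Rn n → ℂ}
    (hW : AEStronglyMeasurable W) (x : Rn n) :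
    ∫⁻ z, ENNReal.ofReal ((‖x - z‖ ^ s)⁻¹) * ‖W z‖ₑ ≤
      lorentzNorm (fun v : Rn n ↦ (((‖v‖ ^ s)⁻¹ : ℝ) : ℂ)) (ENNReal.ofReal (n / s)) ∞ *
        lorentzNorm W (ENNReal.ofReal (n / (n - s))) 1 := by
  have kernel_measurable : Measurable fun v : Rn n ↦ (((‖v‖ ^ s)⁻¹ : ℝ) : ℂ) := by fun_prop
  have enorm_kernel (v : Rn n) : ‖(((‖v‖ ^ s)⁻¹ : ℝ) : ℂ)‖ₑ = ENNReal.ofReal ((‖v‖ ^ s)⁻¹) := by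
    rw [← ofReal_norm, Complex.norm_of_nonneg (by positivity)]
  simpa only [enorm_kernel] using lintegral_enorm_sub_mul_enorm_le_lorentzNorm
    (holderConjugate_div_div_sub hs hsn) kernel_measurable.aestronglyMeasurable hW x

theorem kernel_convolution_bound_general (hs : 0 < s) (hsn : s < n) {W : Rn n → ℂ}
    (hW : AEStronglyMeasurable W) {x y : Rn n} (hxy : x ≠ y) :
    ∫⁻ z, ENNReal.ofReal ((‖x - z‖ ^ s)⁻¹) * ‖W z‖ₑ * ENNReal.ofReal ((‖z - y‖ ^ s)⁻¹) ≤
      lorentzNorm (fun v : Rn n ↦ (((‖v‖ ^ s)⁻¹ : ℝ) : ℂ)) (ENNReal.ofReal (n / s)) ∞ *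
        lorentzNorm W (ENNReal.ofReal (n / (n - s))) 1 *
        ENNReal.ofReal (2 ^ (s + 1) / ‖x - y‖ ^ s) := by
  have riesz_le (u : Rn n) := lintegral_inv_rpow_norm_sub_mul_enorm_le hs hsn hW u
  have integrand_aemeasurable :
      AEMeasurable fun z ↦ ENNReal.ofReal ((‖x - z‖ ^ s)⁻¹) * ‖W z‖ₑ :=
    .mul (by fun_prop) hW.enorm
  have two_mul_const : 2 ^ (s + 1) / ‖x - y‖ ^ s = 2 ^ s / ‖x - y‖ ^ s * 2 := by
    rw [Real.rpow_add_one two_ne_zero, mul_div_right_comm]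
  refine (lintegral_mono fun z ↦
    ofReal_inv_rpow_norm_sub_mul_le hs.le hxy z ‖W z‖ₑ).trans ?_
  rw [lintegral_const_mul' _ _ ENNReal.ofReal_ne_top, lintegral_add_left' integrand_aemeasurable]
  refine (mul_le_mul_right (add_le_add (riesz_le x) (riesz_le y)) _).trans_eq ?_
  rw [two_mul_const, ENNReal.ofReal_mul (by positivity), ENNReal.ofReal_ofNat]
  ring

end InversePower

lemma ofReal_div_natCast_sub_two {n : ℕ} (hn : 3 ≤ n) :
    ENNReal.ofReal (n / ((n - 2 : ℕ) : ℝ)) = (n : ℝ≥0∞) / ((n : ℝ≥0∞) - 2) := by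
  rw [ENNReal.ofReal_div_of_pos (by exact_mod_cast (by omega : 0 < n - 2)), ENNReal.ofReal_natCast,
    ENNReal.ofReal_natCast, ENNReal.natCast_sub, Nat.cast_ofNat]

lemma ofReal_div_sub_natCast_sub_two {n : ℕ} (hn : 2 ≤ n) :
    ENNReal.ofReal (n / (n - ((n - 2 : ℕ) : ℝ))) = (n : ℝ≥0∞) / 2 := by
  rw [Nat.cast_sub hn, Nat.cast_ofNat, _root_.sub_sub_cancel, ENNReal.ofReal_div_of_pos two_pos,
    ENNReal.ofReal_natCast, ENNReal.ofReal_ofNat]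

/-- For `n ≥ 3`, `W ∈ L^{n/2,1}(ℝⁿ)` and `x ≠ y`,
`∫ |x-z|^{-(n-2)} |W(z)| |z-y|^{-(n-2)} dz ≤ ‖a‖_{n/(n-2),∞} ‖W‖_{n/2,1} · 2^{n-1}/|x-y|^{n-2}`
where `a(x) = |x|^{-(n-2)}`. -/
theorem kernel_convolution_bound
    (n : ℕ) (hn : 3 ≤ n) (W : Rn n → ℂ)
    (hW : MemLorentz W ((n : ℝ≥0∞) / 2) 1)
    (x y : Rn n) (hxy : x ≠ y) :
    (∫⁻ z : Rn n,
        ENNReal.ofReal ((‖x - z‖ ^ (n - 2))⁻¹) * (‖W z‖₊ : ℝ≥0∞) *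
          ENNReal.ofReal ((‖z - y‖ ^ (n - 2))⁻¹)) ≤
      lorentzNorm (fun v : Rn n => (((‖v‖ ^ (n - 2))⁻¹ : ℝ) : ℂ))
          ((n : ℝ≥0∞) / ((n : ℝ≥0∞) - 2)) ∞ *
        lorentzNorm W ((n : ℝ≥0∞) / 2) 1 *
        ENNReal.ofReal (2 ^ (n - 1) / ‖x - y‖ ^ (n - 2)) := by
  have two_rpow : (2 : ℝ) ^ (((n - 2 : ℕ) : ℝ) + 1) = 2 ^ (n - 1) := by
    rw [← Nat.cast_succ, Real.rpow_natCast, show (n - 2).succ = n - 1 by omega]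
  simpa only [ofReal_div_natCast_sub_two hn, ofReal_div_sub_natCast_sub_two (by omega : 2 ≤ n),
    two_rpow, Real.rpow_natCast, enorm_eq_nnnorm] using
    kernel_convolution_bound_general (s := ((n - 2 : ℕ) : ℝ))
      (by exact_mod_cast (by omega : 0 < n - 2)) (by exact_mod_cast (by omega : n - 2 < n)) hW.1 hxy
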